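/- (Hochster–Huneke) Let (A, 𝔪) be a d-dimensional complete equidimensional reduced Noetherian local ring of prime characteristic p and let I ⊆ I' be 𝔪-primary ideals of A. Then e_HK(I') = e_HK(I) if and only if I' ⊆ I^*. -/

import Mathlib

open IsLocalRing Filter Topology
open scoped TensorProduct

/-- The Frobenius bracket power `I^{[q]}`: the ideal generated by `q`-th powers of elements of `I`. -/
def Ideal.bracketPow {R : Type*} [CommRing R] (I : Ideal R) (q : ℕ) : Ideal R :=
  Ideal.span ((fun a => a ^ q) '' (I : Set R))

/-- `R°`: the set of elements of `R` not contained in any minimal prime ideal. -/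
def ringCirc (R : Type*) [CommRing R] : Set R :=
  {c | ∀ P ∈ minimalPrimes R, c ∉ P}

/-- The tight closure of an ideal `I` in a ring of characteristic `p`:
`x ∈ I^*` iff there is `c ∈ R°` with `c * x ^ (p ^ e) ∈ I^{[p^e]}` for all sufficiently
large `e`. -/
def tightClosure {R : Type*} [CommRing R] (p : ℕ) (I : Ideal R) : Set R :=
  {x | ∃ c ∈ ringCirc R, ∃ N : ℕ, ∀ e : ℕ, N ≤ e → c * x ^ p ^ e ∈ I.bracketPow (p ^ e)}

/-- `x` is integral over the ideal `J`: there are `n ≥ 1` and `aᵢ ∈ Jⁱ` with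
`x ^ n + a₁ x ^ (n-1) + ⋯ + aₙ = 0`. -/
def IsIntegralOverIdeal {R : Type*} [CommRing R] (J : Ideal R) (x : R) : Prop :=
  ∃ n : ℕ, 0 < n ∧ ∃ a : ℕ → R, (∀ i ∈ Finset.Icc 1 n, a i ∈ J ^ i) ∧
    x ^ n + ∑ i ∈ Finset.Icc 1 n, a i * x ^ (n - i) = 0

/-- `R` is F-finite: `F_*R` is a finitely generated `R`-module, i.e. there is a finite set
of generators `s` such that every element of `R` is an `R`-linear combination of elements of
`s` with respect to the Frobenius-twisted action `r • b = r ^ p * b`. -/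
def FFinite (R : Type*) [CommRing R] (p : ℕ) : Prop :=
  ∃ s : Finset R, ∀ x : R, ∃ a : R → R, x = ∑ b ∈ s, a b ^ p * b

/-- The map `cF^e : R → F^e_* R`, `x ↦ c * x ^ (p ^ e)`, splits as an `R`-module
homomorphism: there is an additive `φ : R → R` with `φ (r ^ (p ^ e) * x) = r * φ x`
for all `r, x` and `φ c = 1`. -/
def FrobSplitsWith {R : Type*} [CommRing R] (p : ℕ) (c : R) (e : ℕ) : Prop :=
  ∃ φ : R →+ R, (∀ r x : R, φ (r ^ p ^ e * x) = r * φ x) ∧ φ c = 1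

/-- `R` is strongly F-regular: F-finite, reduced, and for every `c ∈ R°` some `cF^e` splits. -/
def StronglyFRegular (R : Type*) [CommRing R] (p : ℕ) : Prop :=
  FFinite R p ∧ IsReduced R ∧ ∀ c ∈ ringCirc R, ∃ e : ℕ, FrobSplitsWith p c e

/-- `R` is F-pure: the Frobenius map `R → F_* R` splits as an `R`-module homomorphism. -/
def FPure (R : Type*) [CommRing R] (p : ℕ) : Prop :=
  ∃ φ : R →+ R, (∀ r x : R, φ (r ^ p * x) = r * φ x) ∧ φ 1 = 1

/-- A regular local ring: a Noetherian local ring whose maximal ideal can be generated by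
`dim R` elements. -/
def IsRegularLocal (R : Type*) [CommRing R] [IsLocalRing R] : Prop :=
  IsNoetherianRing R ∧ ∃ (d : ℕ) (x : Fin d → R),
    ringKrullDim R = d ∧ IsLocalRing.maximalIdeal R = Ideal.span (Set.range x)

/-- The height of an ideal: the infimum of the heights of the primes containing it. -/
noncomputable def idealHeight {R : Type*} [CommRing R] (I : Ideal R) : ℕ∞ :=
  ⨅ (P : PrimeSpectrum R) (_ : I ≤ P.asIdeal), Order.height P

/-- A parameter ideal: an ideal generated by `ht I` elements. -/
def IsParameterIdeal {R : Type*} [CommRing R] (I : Ideal R) : Prop :=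
  ∃ n : ℕ, idealHeight I = n ∧ ∃ x : Fin n → R, I = Ideal.span (Set.range x)

/-- A local ring is F-rational if every parameter ideal is tightly closed. -/
def FRationalLocal (R : Type*) [CommRing R] [IsLocalRing R] (p : ℕ) : Prop :=
  ∀ I : Ideal R, IsParameterIdeal I → tightClosure p I = ↑I

/-- A Cohen–Macaulay local ring: every full system of parameters `x₁, …, x_d`
(`d = dim B`) is a regular sequence, i.e. `(x₁, …, xᵢ) : xᵢ₊₁ = (x₁, …, xᵢ)`. -/
def IsCohenMacaulayLocalRing (B : Type*) [CommRing B] [IsLocalRing B] : Prop :=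
  ∀ d : ℕ, ringKrullDim B = d →
    ∀ x : Fin d → B, (∀ i, x i ∈ IsLocalRing.maximalIdeal B) →
      (Ideal.span (Set.range x)).radical = IsLocalRing.maximalIdeal B →
      ∀ i : Fin d,
        Submodule.colon (Ideal.span (x '' {j | (j : ℕ) < (i : ℕ)})) (Ideal.span {x i}) =
          Ideal.span (x '' {j | (j : ℕ) < (i : ℕ)})

/-- The length `ℓ_R M` of a module, as an extended natural number: the supremum of the
lengths of chains of submodules below `⊤`. -/
noncomputable def moduleLength (R M : Type*) [Ring R] [AddCommGroup M] [Module R M] : ℕ∞ :=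
  Order.height (⊤ : Submodule R M)

/-- The Frobenius endomorphism `x ↦ x ^ p`, as a ring homomorphism, in prime
characteristic `p`. -/
noncomputable def frobeniusRingHom (R : Type*) [CommRing R] (p : ℕ) [Fact p.Prime] [CharP R p] :
    R →+* R :=
  frobenius R p

/-!
Write `q = p ^ e`. If `I' ⊆ I^*`, finitely many generators of `I'` have a common multiplier `c ∈ A°`
for large `e`; it kills `I'^{[q]} / I^{[q]}`, which is generated by a fixed number of elements.
Hence the length of that module is at most a constant times `ℓ(A / (I^{[q]} + cA))`, which is
`O(q ^ (d - 1))` because `c` is a nonzerodivisor.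

Conversely, let the multiplicities agree and let `x ∈ I'`. As
`ℓ(A / (I^{[q]} : x ^ q)) ≤ ℓ(A / I^{[q]}) - ℓ(A / I'^{[q]})`, for every `m` there is an `e` such
that `J = I^{[p ^ (m + e)]} : x ^ p ^ (m + e)` has colength less than `p ^ (e * d)`. By Cohen's
theorem `A` is finite and torsion-free over some `S = k⟦X₁, …, X_d⟧`, where `k` need not be
F-finite. Counting monomials, `J` contains a power series `f ∈ S` with a nonzero coefficient at some
`X ^ α` with all `α i < p ^ e`, and some `p ^ (-e)`-linear `σ : S → S` sends `f` to a unit. Since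
`S[A ^ p ^ e₀]` is generically separable over `S` for some `e₀`, every such `σ` extends to `A` up to
a twist by `x ↦ x ^ p ^ e₀` and a factor `D ∈ S` independent of `e`. Applying the extension to
`f * x ^ p ^ (m + e) ∈ I^{[p ^ (m + e)]}` yields `D * x ^ p ^ m ∈ I^{[p ^ m]}` for all large `m`.
-/

universe u

/-! ### Coefficient fields -/

section CoefficientField

section PartialCoefficientField

open Polynomial

variable (p : ℕ) [Fact p.Prime] {B K : Type*} [CommRing B] [CharP B p] [Field K] (π : B →+* K)

/-- `L` is a partial coefficient field for `π : B → K`: a subring containing all `p`-th powers on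
which `π` is injective. The image of a maximal one is all of `K`. -/
structure IsPartialCoefficientField (L : Subring B) : Prop where
  frobenius_range_le : (frobenius B p).range ≤ L
  eq_zero : ∀ b ∈ L, π b = 0 → b = 0

variable {p π}

theorem isPartialCoefficientField_frobenius_range (hπ : ∀ b, π b = 0 → b ^ p = 0) :
    IsPartialCoefficientField p π (frobenius B p).range where
  frobenius_range_le := le_rfl
  eq_zero := by
    rintro _ ⟨b, rfl⟩ hb
    rw [frobenius_def, map_pow] at hb
    exact hπ b (eq_zero_of_pow_eq_zero hb)

theorem IsPartialCoefficientField.isField {L : Subring B}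
    (hL : IsPartialCoefficientField p π L) (hπ : ∀ b, π b = 0 → b ^ p = 0)
    (hsurj : Function.Surjective π) : IsField L where
  exists_pair_ne := ⟨0, 1, fun h => by simpa using congrArg (fun l : L => π l) h⟩
  mul_comm := mul_comm
  mul_inv_cancel {l} hl := by
    have hp : p.Prime := Fact.out
    have hl0 : π l ≠ 0 := fun h => hl (Subtype.ext (hL.eq_zero l l.2 h))
    obtain ⟨c, hc⟩ := hsurj (π l)⁻¹
    have hmem : (l : B) ^ (p - 1) * c ^ p ∈ L :=
      mul_mem (pow_mem l.2 _) (hL.frobenius_range_le ⟨c, rfl⟩)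
    refine ⟨⟨_, hmem⟩, Subtype.ext ?_⟩
    have hone : (l : B) * ((l : B) ^ (p - 1) * c ^ p) = ((l : B) * c) ^ p := by
      rw [← mul_assoc, mul_pow_sub_one hp.ne_zero, mul_pow]
    have hlc : π (l * c - 1) = 0 := by
      rw [map_sub, map_mul, hc, mul_inv_cancel₀ hl0, map_one, sub_self]
    have := hπ _ hlc
    rw [sub_pow_expChar, one_pow, sub_eq_zero] at this
    exact hone.trans this

theorem IsPartialCoefficientField.range_aeval {L : Subring B}
    (hL : IsPartialCoefficientField p π L) (hπ : ∀ b, π b = 0 → b ^ p = 0)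
    (hsurj : Function.Surjective π) {y : B} (hy : ∀ l ∈ L, π l ≠ π y) :
    IsPartialCoefficientField p π (aeval (R := L) y).range.toSubring where
  frobenius_range_le := hL.frobenius_range_le.trans fun l hl => ⟨C ⟨l, hl⟩, aeval_C _ _⟩
  eq_zero := by
    rintro _ ⟨f, rfl⟩ hf
    let _ : Field L := (hL.isField hπ hsurj).toField
    have hp : p.Prime := Fact.out
    have : CharP K p := (CharP.charP_iff_prime_eq_zero hp).2 (by
      rw [← map_natCast π, CharP.cast_eq_zero, map_zero])
    let g : L[X] := X ^ p - C ⟨y ^ p, hL.frobenius_range_le ⟨y, rfl⟩⟩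
    have hgy : aeval y g = 0 := by
      simp only [g, map_sub, map_pow, aeval_X, aeval_C]
      exact sub_self _
    have hg : Irreducible g := by
      refine X_pow_sub_C_irreducible_of_prime hp fun l hl => hy l l.2 ?_
      have hlp : (l : B) ^ p = y ^ p := congrArg Subtype.val hl
      refine frobenius_inj K p ?_
      rw [frobenius_def, frobenius_def, ← map_pow, hlp, map_pow]
    by_cases hgf : g ∣ f
    · obtain ⟨v, rfl⟩ := hgf
      exact (map_mul (aeval y) g v).trans (by rw [hgy, zero_mul])
    · obtain ⟨u, v, huv⟩ := hg.coprime_iff_not_dvd.2 hgf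
      have huvy := congrArg (fun h => π (aeval y h)) huv
      simp only [map_add, map_mul, map_one, hgy, mul_zero, zero_add] at huvy
      exact absurd ((mul_eq_zero_of_right _ hf).symm.trans huvy) zero_ne_one

theorem exists_ringHom_rightInverse (hπ : ∀ b, π b = 0 → b ^ p = 0)
    (hsurj : Function.Surjective π) : ∃ s : K →+* B, ∀ x, π (s x) = x := by
  have hsup (c : Set (Subring B)) (hc : ∀ L ∈ c, IsPartialCoefficientField p π L)
      (hchain : IsChain (· ≤ ·) c) {L : Subring B} (hLc : L ∈ c) :
      IsPartialCoefficientField p π (sSup c) := by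
    refine ⟨(hc L hLc).frobenius_range_le.trans (le_sSup hLc), fun b hb h => ?_⟩
    rw [Subring.mem_sSup_of_directedOn ⟨L, hLc⟩ hchain.directedOn] at hb
    obtain ⟨M, hM, hbM⟩ := hb
    exact (hc M hM).eq_zero b hbM h
  obtain ⟨L, -, hL⟩ := zorn_le_nonempty₀ {L | IsPartialCoefficientField p π L}
    (fun c hc hchain L hLc =>
      ⟨sSup c, hsup c (fun _ h => hc h) hchain hLc, fun M hM => le_sSup hM⟩)
    _ (isPartialCoefficientField_frobenius_range hπ)
  have hLsurj : Function.Surjective (π.comp L.subtype) := by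
    intro x
    by_contra! hx
    obtain ⟨y, rfl⟩ := hsurj x
    have hy : ∀ l ∈ L, π l ≠ π y := fun l hl => hx ⟨l, hl⟩
    have hle := hL.2 (hL.1.range_aeval hπ hsurj hy) fun l hl => ⟨C ⟨l, hl⟩, aeval_C _ _⟩
    exact hy y (hle ⟨X, aeval_X _⟩) rfl
  have hLinj : Function.Injective (π.comp L.subtype) :=
    (injective_iff_map_eq_zero _).2 fun l hl => Subtype.ext (hL.1.eq_zero l l.2 hl)
  let φ : L ≃+* K := RingEquiv.ofBijective _ ⟨hLinj, hLsurj⟩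
  exact ⟨L.subtype.comp φ.symm, φ.apply_symm_apply⟩

end PartialCoefficientField

theorem formallySmooth_of_perfectRing (p : ℕ) [Fact p.Prime] (F K : Type*) [Field F] [CharP F p]
    [PerfectRing F p] [Field K] [Algebra F K] : Algebra.FormallySmooth F K := by
  let f : MvPolynomial K F →ₐ[F] K := MvPolynomial.aeval id
  have hf : Function.Surjective f := fun x => ⟨MvPolynomial.X x, MvPolynomial.aeval_X _ _⟩
  let π := f.kerSquareLift
  have hsurj : Function.Surjective π := Ideal.Quotient.lift_surjective_of_surjective _ _ hf
  have hker : ∀ b, π b = 0 → b ^ p = 0 := fun b hb => by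
    have hb2 : b ^ 2 ∈ (RingHom.ker π.toRingHom) ^ 2 := Ideal.pow_mem_pow hb 2
    rw [AlgHom.ker_kerSquareLift, Ideal.cotangentIdeal_square] at hb2
    exact pow_eq_zero_of_le (Fact.out : p.Prime).two_le hb2
  have : Nontrivial (MvPolynomial K F ⧸ RingHom.ker f.toRingHom ^ 2) :=
    π.toRingHom.domain_nontrivial
  have : CharP (MvPolynomial K F ⧸ RingHom.ker f.toRingHom ^ 2) p :=
    charP_of_injective_algebraMap (algebraMap F _).injective p
  obtain ⟨s, hs⟩ := exists_ringHom_rightInverse (π := π.toRingHom) hker hsurj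
  have hsF (a : F) : s (algebraMap F K a) = algebraMap F _ a := by
    obtain ⟨b, rfl⟩ := surjective_frobenius F p a
    have hb : π (s (algebraMap F K b) - algebraMap F _ b) = 0 := by
      rw [map_sub, π.commutes, sub_eq_zero]
      exact hs _
    have := hker _ hb
    rwa [sub_pow_expChar, sub_eq_zero, ← map_pow, ← map_pow, ← map_pow] at this
  exact (Algebra.FormallySmooth.iff_split_surjection f hf).2
    ⟨{ s with commutes' := hsF }, AlgHom.ext hs⟩

theorem exists_coefficientField (p : ℕ) [Fact p.Prime] (A : Type u) [CommRing A] [IsLocalRing A]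
    [CharP A p] [IsAdicComplete (maximalIdeal A) A] :
    ∃ (k : Type u) (_ : Field k) (_ : Algebra k A),
      Function.Surjective (algebraMap k (ResidueField A)) := by
  let _ : Algebra (ZMod p) A := ZMod.algebra A p
  have : Algebra.FormallySmooth (ZMod p) (ResidueField A) := formallySmooth_of_perfectRing p _ _
  obtain ⟨g, hg⟩ := Algebra.FormallySmooth.exists_mkₐ_comp_eq_of_isAdicComplete
    (I := maximalIdeal A) (AlgHom.id (ZMod p) (ResidueField A) : _ →ₐ[ZMod p] A ⧸ maximalIdeal A)
  exact ⟨ResidueField A, inferInstance, g.toRingHom.toAlgebra, fun x => ⟨x, congr($hg x)⟩⟩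

end CoefficientField

/-! ### Module-finiteness over power series rings -/

section PowerSeriesBase

theorem maximalIdeal_mvPowerSeries (τ k : Type*) [Finite τ] [Field k] :
    maximalIdeal (MvPowerSeries τ k) = Ideal.span (Set.range MvPowerSeries.X) := by
  refine (IsLocalRing.eq_maximalIdeal ?_).symm
  let e := MvPowerSeries.toAdicCompletionAlgEquiv τ k
  have hmap : (Ideal.span (Set.range MvPowerSeries.X)).map e.toRingEquiv =
      (MvPolynomial.idealOfVars τ k).map (algebraMap _ _) := by
    simp_rw [Ideal.map_span, ← Set.range_comp]
    congr 2
    ext1 i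
    simp [e, AdicCompletion.algebraMap_apply, ← MvPolynomial.coe_X,
      MvPowerSeries.toAdicCompletion_coe]
  have hvars : MvPolynomial.idealOfVars τ k =
      RingHom.ker (MvPolynomial.constantCoeff : MvPolynomial τ k →+* k) := by
    ext f
    rw [← pow_one (MvPolynomial.idealOfVars τ k), MvPolynomial.mem_pow_idealOfVars_iff',
      RingHom.mem_ker, MvPolynomial.constantCoeff_eq]
    simp only [Nat.lt_one_iff, Finsupp.degree_eq_zero_iff, forall_eq]
  have : (MvPolynomial.idealOfVars τ k).IsMaximal := by
    rw [hvars]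
    exact RingHom.ker_isMaximal_of_surjective _ fun a =>
      ⟨MvPolynomial.C a, MvPolynomial.constantCoeff_C _ a⟩
  rw [← Ideal.isMaximal_map_iff_of_bijective e.toRingEquiv e.bijective, hmap]
  exact AdicCompletion.isMaximal_map_of_le _ _ le_rfl (MvPolynomial.idealOfVars_fg τ k)

theorem isPrecomplete_pi {ι S : Type*} [Finite ι] [CommRing S] (I : Ideal S) (M : ι → Type*)
    [∀ i, AddCommGroup (M i)] [∀ i, Module S (M i)] [∀ i, IsPrecomplete I (M i)] :
    IsPrecomplete I (∀ i, M i) := by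
  classical
  have := Fintype.ofFinite ι
  rw [← AdicCompletion.of_surjective_iff]
  intro x
  choose y hy using fun i => AdicCompletion.of_surjective I (M i)
    (AdicCompletion.piEquivOfFintype I M x i)
  refine ⟨y, (AdicCompletion.piEquivOfFintype I M).injective (funext fun i => ?_)⟩
  rw [← hy, AdicCompletion.piEquivOfFintype_apply]
  exact AdicCompletion.map_of I _ _

theorem module_finite_of_finite_quotient {S M : Type*} [CommRing S] [AddCommGroup M] [Module S M]
    (I : Ideal S) [IsPrecomplete I S] [IsHausdorff I M]
    [Module.Finite S (M ⧸ (I • ⊤ : Submodule S M))] : Module.Finite S M := by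
  obtain ⟨n, s, hs⟩ := Module.Finite.exists_fin (R := S) (M := M ⧸ (I • ⊤ : Submodule S M))
  choose t ht using fun i => Submodule.mkQ_surjective _ (s i)
  have := isPrecomplete_pi I fun _ : Fin n => S
  refine Module.Finite.of_surjective (Fintype.linearCombination S t)
    (surjective_of_mkQ_comp_surjective (I := I) ?_)
  rw [← LinearMap.range_eq_top, LinearMap.range_comp, Fintype.range_linearCombination,
    Submodule.map_span, ← Set.range_comp, ← hs]
  exact congrArg _ (congrArg _ (funext ht))

theorem length_quotient_ne_top {A : Type*} [CommRing A] [IsLocalRing A] [IsNoetherianRing A]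
    {J : Ideal A} (hJ : maximalIdeal A ≤ J.radical) : Module.length A (A ⧸ J) ≠ ⊤ := by
  rcases eq_or_ne J ⊤ with rfl | hJ1
  · simp [Module.length_eq_zero]
  have hmin : maximalIdeal A ∈ J.minimalPrimes :=
    ⟨⟨inferInstance, le_maximalIdeal hJ1⟩,
      fun P hP _ => hJ.trans ((Ideal.IsPrime.radical_le_iff hP.1).2 hP.2)⟩
  have : IsArtinianRing (A ⧸ J) := quotient_artinian_of_mem_minimalPrimes_of_isLocalRing _ hmin
  rw [Module.length_eq_of_surjective (R := A ⧸ J) (S := A) Ideal.Quotient.mk_surjective]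
  exact Module.length_ne_top

theorem length_eq_of_surjective_residueField {R A M : Type*} [CommRing R] [IsLocalRing R]
    [CommRing A] [IsLocalRing A] [Algebra R A] [IsLocalHom (algebraMap R A)] [AddCommGroup M]
    [Module R M] [Module A M] [IsScalarTower R A M]
    (hres : Function.Surjective (algebraMap R (ResidueField A))) :
    Module.length R M = Module.length A M := by
  have hsurj : Function.Surjective (algebraMap (ResidueField R) (ResidueField A)) := fun y =>
    (hres y).imp' (residue R) fun _ h => h
  rw [IsLocalRing.length_restrictScalars R A M,
    Module.length_eq_of_surjective (S := ResidueField R) (R := ResidueField A) hsurj,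
    Module.length_eq_one (ResidueField A) (ResidueField A), mul_one]

theorem finite_of_maximalIdeal_le_radical_map {S A : Type*} [CommRing S] [IsLocalRing S]
    [IsPrecomplete (maximalIdeal S) S] [CommRing A] [IsLocalRing A] [IsNoetherianRing A]
    [Algebra S A] [IsLocalHom (algebraMap S A)]
    (hres : Function.Surjective (algebraMap S (ResidueField A)))
    (hrad : maximalIdeal A ≤ ((maximalIdeal S).map (algebraMap S A)).radical) :
    Module.Finite S A := by
  have hne : (maximalIdeal S).map (algebraMap S A) ≠ ⊤ :=
    ne_top_of_le_ne_top (Ideal.IsPrime.ne_top inferInstance)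
      (((local_hom_TFAE (algebraMap S A)).out 0 2).1 ‹_›)
  have : IsHausdorff (maximalIdeal S) A := by
    rw [← IsHausdorff.map_algebraMap_iff (S := A)]
    exact IsHausdorff.of_isLocalRing _ _ hne
  have : Module.Finite S (A ⧸ (maximalIdeal S • ⊤ : Submodule S A)) := by
    rw [Ideal.smul_top_eq_map]
    have hlen := length_quotient_ne_top hrad
    rw [← length_eq_of_surjective_residueField hres, Module.length_ne_top_iff,
      isFiniteLength_iff_isNoetherian_isArtinian] at hlen
    have := hlen.1
    exact Module.Finite.equiv (Submodule.Quotient.restrictScalarsEquiv S _).symm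
  exact module_finite_of_finite_quotient (maximalIdeal S)

theorem exists_mvPowerSeries_algHom {τ k A : Type*} [Finite τ] [CommRing k] [CommRing A]
    [Algebra k A] (I : Ideal A) [hI : IsAdicComplete I A] (x : τ → A) (hx : ∀ i, x i ∈ I) :
    ∃ ψ : MvPowerSeries τ k →ₐ[k] A, ∀ i, ψ (MvPowerSeries.X i) = x i := by
  let _ : WithIdeal A := ⟨I⟩
  let _ : UniformSpace k := ⊥
  have : DiscreteTopology k := ⟨rfl⟩
  have hadic : IsAdic I := rfl
  obtain ⟨_, _⟩ := hadic.isAdicComplete_iff.1 hI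
  have : ContinuousSMul k A := DiscreteTopology.instContinuousSMul k A
  have hx : MvPowerSeries.HasEval x := ⟨fun i => WithIdeal.isTopologicallyNilpotent_of_mem (hx i),
    by rw [Filter.cofinite_eq_bot]; exact Filter.tendsto_bot⟩
  exact ⟨MvPowerSeries.aeval hx, fun i => by rw [MvPowerSeries.coe_aeval, MvPowerSeries.eval₂_X]⟩

theorem ringKrullDim_le_of_isIntegral (R A : Type*) [CommRing R] [CommRing A] [Algebra R A]
    [Algebra.IsIntegral R A] : ringKrullDim A ≤ ringKrullDim R :=
  Order.krullDim_le_of_strictMono (PrimeSpectrum.comap (algebraMap R A)) fun _ _ hPQ =>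
    Ideal.IsIntegral.comap_lt_comap hPQ

theorem ringKrullDim_mvPowerSeries_le (τ k : Type*) [Finite τ] [Field k] :
    ringKrullDim (MvPowerSeries τ k) ≤ Nat.card τ := by
  refine (ringKrullDim_le_spanFinrank_maximalIdeal _).trans ?_
  rw [maximalIdeal_mvPowerSeries]
  have hfin := Set.finite_range (MvPowerSeries.X : τ → MvPowerSeries τ k)
  exact_mod_cast (Submodule.spanFinrank_span_le_ncard_of_finite hfin).trans
    (by simpa using Set.ncard_image_le (f := MvPowerSeries.X) (Set.finite_univ (α := τ)))

theorem exists_radical_span_eq_maximalIdeal (B : Type*) [CommRing B] [IsLocalRing B]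
    [IsNoetherianRing B] : ∃ (n : ℕ) (x : Fin n → B), ringKrullDim B = n ∧
      (Ideal.span (Set.range x)).radical = maximalIdeal B := by
  obtain ⟨s, hs, hcard⟩ := (maximalIdeal B).exists_finset_card_eq_height_of_isNoetherianRing
  refine ⟨s.card, fun i => s.equivFin.symm i, ?_, ?_⟩
  · rw [← IsLocalRing.maximalIdeal_height_eq_ringKrullDim, ← hcard]
    rfl
  · have hrange : Set.range (fun i => (s.equivFin.symm i : B)) = s := by
      rw [← Function.comp_def, s.equivFin.symm.surjective.range_comp]
      exact Subtype.range_coe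
    rw [hrange]
    refine le_antisymm ((Ideal.IsPrime.radical_le_iff inferInstance).2 hs.1.2) ?_
    rw [Ideal.radical_eq_sInf]
    exact le_sInf fun P hP => hs.2 ⟨hP.2, hP.1⟩ (le_maximalIdeal hP.2.ne_top)

theorem algebraMap_mem_ringCirc {S A : Type*} [CommRing S] [IsDomain S] [CommRing A] [Algebra S A]
    [Algebra.IsIntegral S A] {d : ℕ} (hS : ringKrullDim S ≤ d)
    (hA : ∀ P ∈ minimalPrimes A, ringKrullDim (A ⧸ P) = d) {s : S} (hs : s ≠ 0) :
    algebraMap S A s ∈ ringCirc A := by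
  intro P hP hsP
  let φ : S ⧸ Ideal.span {s} →+* A ⧸ P := Ideal.quotientMap P (algebraMap S A) (by
    rwa [Ideal.span_singleton_le_iff_mem])
  let _ : Algebra (S ⧸ Ideal.span {s}) (A ⧸ P) := φ.toAlgebra
  have : IsScalarTower S (S ⧸ Ideal.span {s}) (A ⧸ P) := IsScalarTower.of_algebraMap_eq' rfl
  have : Algebra.IsIntegral (S ⧸ Ideal.span {s}) (A ⧸ P) := Algebra.IsIntegral.tower_top S
  have hdim : (d : WithBot ℕ∞) + 1 ≤ d := calc
    (d : WithBot ℕ∞) + 1 = ringKrullDim (A ⧸ P) + 1 := by rw [hA P hP]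
    _ ≤ ringKrullDim (S ⧸ Ideal.span {s}) + 1 := by
      gcongr
      exact ringKrullDim_le_of_isIntegral _ _
    _ ≤ ringKrullDim S :=
      ringKrullDim_quotient_succ_le_of_nonZeroDivisor (mem_nonZeroDivisors_of_ne_zero hs)
    _ ≤ d := hS
  exact absurd (by exact_mod_cast hdim) (Nat.not_succ_le_self d)

theorem ringCirc_subset_nonZeroDivisors {A : Type*} [CommRing A] [IsReduced A] :
    ringCirc A ⊆ (nonZeroDivisors A : Set A) := by
  have hInf : sInf (minimalPrimes A) = ⊥ := by
    rw [minimalPrimes, Ideal.sInf_minimalPrimes]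
    exact nilradical_eq_zero A
  intro c hc
  rw [SetLike.mem_coe, mem_nonZeroDivisors_iff_right]
  intro a hac
  have ha : a ∈ sInf (minimalPrimes A) := by
    rw [Submodule.mem_sInf]
    intro P hP
    exact (hP.1.1.mem_or_mem (hac ▸ P.zero_mem : a * c ∈ P)).resolve_right (hc P hP)
  rwa [hInf] at ha

theorem isTorsionFree_of_ringKrullDim_eq {S A : Type*} [CommRing S] [IsDomain S] [CommRing A]
    [IsReduced A] [Algebra S A] [Algebra.IsIntegral S A] {d : ℕ} (hS : ringKrullDim S ≤ d)
    (hA : ∀ P ∈ minimalPrimes A, ringKrullDim (A ⧸ P) = d) : Module.IsTorsionFree S A := by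
  refine ⟨fun s hs => ?_⟩
  have hmem := ringCirc_subset_nonZeroDivisors (algebraMap_mem_ringCirc hS hA hs.ne_zero)
  intro a b hab
  simp only [Algebra.smul_def] at hab
  exact (mul_cancel_left_mem_nonZeroDivisors hmem).1 hab

end PowerSeriesBase

/-! ### Extension of `p ^ (-e)`-linear maps -/

section FrobeniusBasis

/-- An additive endomorphism that is `q⁻¹`-linear, i.e. `R`-linear as a map from the pushforward
of `R` along `x ↦ x ^ q` to `R`. -/
def IsInvPowLinear {R : Type*} [CommRing R] (q : ℕ) (φ : R →+ R) : Prop :=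
  ∀ r x : R, φ (r ^ q * x) = r * φ x

/-- Elements `w i` of an `S`-algebra `A` whose `p ^ e`-th powers form, for every `e`, a basis of
`A` over `S` up to a denominator `D ^ p ^ e`. Over the fraction field of `S` this is a basis of a
separable algebra. -/
structure IsFrobeniusBasis (p : ℕ) {S A ι : Type*} [CommRing S] [CommRing A] [Algebra S A]
    (w : ι → A) (D : S) : Prop where
  denom_ne_zero : D ≠ 0
  linearIndependent (e : ℕ) : LinearIndependent S fun i => w i ^ p ^ e
  pow_smul_mem_span (e : ℕ) (a : A) :
    D ^ p ^ e • a ∈ Submodule.span S (Set.range fun i => w i ^ p ^ e)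

section Rank

variable {S M : Type*} [CommRing S] [IsDomain S] [AddCommGroup M] [Module S M]

theorem exists_forall_smul_mem_of_finrank_eq [Module.Finite S M] {N : Submodule S M}
    (hN : Module.finrank S N = Module.finrank S M) : ∃ D : S, D ≠ 0 ∧ ∀ x : M, D • x ∈ N := by
  have hrank : Module.finrank S (M ⧸ N) = 0 := by
    have := Submodule.finrank_quotient_add_finrank N
    omega
  obtain ⟨D, hD, hD0⟩ := Submodule.annihilator_top_inter_nonZeroDivisors
    (Module.finrank_eq_zero_iff_isTorsion.1 hrank)
  refine ⟨D, nonZeroDivisors.ne_zero hD0, fun x => ?_⟩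
  rw [← Submodule.Quotient.mk_eq_zero, Submodule.Quotient.mk_smul]
  exact Submodule.mem_annihilator.1 hD _ trivial

theorem linearIndependent_of_smul_mem_span [Module.IsTorsionFree S M] {ι : Type*} [Fintype ι]
    {v : ι → M} (hcard : Fintype.card ι = Module.finrank S M) {D : S} (hD : D ≠ 0)
    (hv : ∀ x, D • x ∈ Submodule.span S (Set.range v)) : LinearIndependent S v := by
  let N := Submodule.span S (Set.range v)
  have : Module.Finite S N := Module.Finite.span_of_finite S (Set.finite_range v)
  have hrank : Fintype.card ι = Module.finrank S N := by
    refine le_antisymm ?_ (finrank_range_le_card v)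
    rw [hcard]
    exact LinearMap.finrank_le_finrank_of_injective
      (f := (LinearMap.lsmul S M D).codRestrict N hv)
      fun x y hxy => smul_right_injective M hD (congrArg Subtype.val hxy)
  let v' : ι → N := fun i => ⟨v i, Submodule.subset_span ⟨i, rfl⟩⟩
  have htop : ⊤ ≤ Submodule.span S (Set.range v') := by
    rw [← Submodule.map_le_map_iff_of_injective N.injective_subtype, Submodule.map_span,
      ← Set.range_comp, Submodule.map_top, Submodule.range_subtype]
    rfl
  exact (linearIndependent_of_top_le_span_of_card_eq_finrank htop hrank).map'
    N.subtype N.ker_subtype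

end Rank

variable {p : ℕ} {S A : Type*} [CommRing S] [CommRing A] [Algebra S A]

theorem pow_mem_span_pow [ExpChar A p] {s : Set A} {a : A} (ha : a ∈ Submodule.span S s) (e : ℕ) :
    a ^ p ^ e ∈ Submodule.span S ((· ^ p ^ e) '' s) := by
  induction ha using Submodule.span_induction with
  | mem x hx => exact Submodule.subset_span ⟨x, hx, rfl⟩
  | zero => rw [zero_pow (pow_ne_zero e (expChar_ne_zero A p))]; exact Submodule.zero_mem _
  | add x y _ _ hx hy => rw [add_pow_expChar_pow]; exact Submodule.add_mem _ hx hy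
  | smul r x _ hx => rw [smul_pow]; exact Submodule.smul_mem _ _ hx

theorem pow_smul_mem_span_pow [Fact p.Prime] [ExpChar A p] {ι : Type*} {w : ι → A} {D : S}
    (h₀ : ∀ a, D • a ∈ Submodule.span S (Set.range w))
    (h₁ : ∀ i, D • w i ∈ Submodule.span S (Set.range fun i => w i ^ p)) (e : ℕ) (a : A) :
    D ^ p ^ e • a ∈ Submodule.span S (Set.range fun i => w i ^ p ^ e) := by
  induction e with
  | zero => simpa using h₀ a
  | succ e ih =>
    have hmap : Submodule.span S (Set.range fun i => w i ^ p ^ e) ≤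
        (Submodule.span S (Set.range fun i => w i ^ p ^ (e + 1))).comap
          (LinearMap.lsmul S A (D ^ p ^ e)) := by
      rw [Submodule.span_le]
      rintro _ ⟨i, rfl⟩
      have := pow_mem_span_pow (p := p) (h₁ i) e
      rw [← Set.range_comp, smul_pow] at this
      simpa only [Function.comp_def, ← pow_mul, ← pow_succ', SetLike.mem_coe,
        Submodule.mem_comap, LinearMap.lsmul_apply] using this
    have hexp : p ^ e + p ^ e ≤ p ^ (e + 1) := by
      rw [pow_succ, ← mul_two]
      exact Nat.mul_le_mul_left _ (Fact.out : p.Prime).two_le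
    obtain ⟨t, ht⟩ := pow_dvd_pow D hexp
    rw [ht, pow_add D, mul_comm, mul_smul, mul_smul]
    exact Submodule.smul_mem _ t (hmap ih)

section Existence

variable [IsDomain S] [Module.Finite S A] [Module.IsTorsionFree S A]

theorem exists_isFrobeniusBasis [Fact p.Prime] [ExpChar A p] {D : S} (hD : D ≠ 0)
    (hpow : ∀ a : A, D • a ∈ Submodule.span S (Set.range fun a : A => a ^ p)) :
    ∃ (w : Fin (Module.finrank S A) → A) (D : S), IsFrobeniusBasis p w D := by
  obtain ⟨w, hw⟩ := exists_linearIndependent_of_le_finrank (le_refl (Module.finrank S A))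
  obtain ⟨B, hB, hBw⟩ := exists_forall_smul_mem_of_finrank_eq
    (N := Submodule.span S (Set.range w)) (by rw [finrank_span_eq_card hw, Fintype.card_fin])
  let C := D * B ^ p * B
  have hC : C ≠ 0 := mul_ne_zero (mul_ne_zero hD (pow_ne_zero p hB)) hB
  have h₀ (a : A) : C • a ∈ Submodule.span S (Set.range w) := by
    rw [mul_smul]
    exact Submodule.smul_mem _ _ (hBw a)
  have hpow' : Submodule.span S (Set.range fun a : A => a ^ p) ≤
      (Submodule.span S (Set.range fun i => w i ^ p)).comap (LinearMap.lsmul S A (B ^ p)) := by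
    rw [Submodule.span_le]
    rintro _ ⟨a, rfl⟩
    have := pow_mem_span_pow (p := p) (hBw a) 1
    rwa [← Set.range_comp, smul_pow, pow_one] at this
  have h₁ (i) : C • w i ∈ Submodule.span S (Set.range fun i => w i ^ p) := by
    rw [show C = B * (B ^ p * D) by ring, mul_smul, mul_smul]
    exact Submodule.smul_mem _ _ (hpow' (hpow _))
  refine ⟨w, C, hC, fun e => ?_, pow_smul_mem_span_pow h₀ h₁⟩
  exact linearIndependent_of_smul_mem_span (Fintype.card_fin _) (pow_ne_zero (p ^ e) hC)
    (pow_smul_mem_span_pow h₀ h₁ e)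

end Existence

theorem exists_addMonoidHom_span_pow [ExpChar A p] {ι : Type*} {w : ι → A} {e : ℕ}
    (hw : LinearIndependent S fun i => w i ^ p ^ e) {σ : S →+ S}
    (hσ : IsInvPowLinear (p ^ e) σ) :
    ∃ Φ : Submodule.span S (Set.range fun i => w i ^ p ^ e) →+ A,
      ∀ c ∈ Submodule.span S (Set.range w), ∀ (s : S) (h), Φ ⟨s • c ^ p ^ e, h⟩ = σ s • c := by
  let Φ := ((Finsupp.linearCombination S w).toAddMonoidHom.comp
    (Finsupp.mapRange.addMonoidHom σ)).comp hw.repr.toAddMonoidHom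
  refine ⟨Φ, fun c hc => ?_⟩
  induction hc using Submodule.span_induction with
  | mem x hx =>
    obtain ⟨i, rfl⟩ := hx
    intro s h
    have : hw.repr ⟨s • w i ^ p ^ e, h⟩ = Finsupp.single i s := hw.repr_eq (by simp)
    simp [Φ, this]
  | zero =>
    intro s h
    simp only [zero_pow (pow_ne_zero e (expChar_ne_zero A p)), smul_zero]
    exact map_zero Φ
  | add x y hx hy ihx ihy =>
    intro s h
    have hmem {x : A} (hx : x ∈ Submodule.span S (Set.range w)) :
        s • x ^ p ^ e ∈ Submodule.span S (Set.range fun i => w i ^ p ^ e) := by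
      have := pow_mem_span_pow (p := p) hx e
      rw [← Set.range_comp] at this
      exact Submodule.smul_mem _ s this
    have hsum := Φ.map_add ⟨_, hmem hx⟩ ⟨_, hmem hy⟩
    rw [ihx, ihy, ← smul_add] at hsum
    simpa only [add_pow_expChar_pow, smul_add, AddMemClass.mk_add_mk] using hsum
  | smul r x _ ih =>
    intro s h
    simp only [smul_pow, smul_smul, mul_comm s] at h ⊢
    rw [ih, hσ, mul_comm]

theorem map_pow_mul_eq_smul_mul {ι : Type*} {w : ι → A} {D : S} {q : ℕ}
    (hD : ∀ a, D • a ∈ Submodule.span S (Set.range w)) {σ : S → S}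
    {Φ : Submodule.span S (Set.range fun i => w i ^ q) →+ A}
    (hΦ : ∀ c ∈ Submodule.span S (Set.range w), ∀ (s : S) (h), Φ ⟨s • c ^ q, h⟩ = σ s • c)
    {δ : A →ₗ[S] Submodule.span S (Set.range fun i => w i ^ q)}
    (hδ : ∀ a, (δ a : A) = D ^ q • a) (b z : A)
    (hz : z ∈ Submodule.span S (Set.range fun i => w i ^ q)) :
    Φ (δ (b ^ q * z)) = D • (b * Φ ⟨z, hz⟩) := by
  induction hz using Submodule.closure_induction with
  | zero =>
    rw [mul_zero, map_zero, map_zero, show Subtype.mk (0 : A) _ = 0 from rfl, map_zero, mul_zero,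
      smul_zero]
  | add x y hx hy ihx ihy =>
    rw [← AddMemClass.mk_add_mk (hx := hx) (hy := hy), map_add, mul_add, mul_add, smul_add,
      map_add, map_add, ihx, ihy]
  | smul_mem r x hx =>
    obtain ⟨i, rfl⟩ := hx
    have heq : (δ (b ^ q * r • w i ^ q) : A) = r • (D • (b * w i)) ^ q := by
      rw [hδ, smul_pow, mul_pow, mul_smul_comm, smul_comm]
    have hmem := heq ▸ (δ _).2
    rw [show δ _ = ⟨_, hmem⟩ from Subtype.ext heq, hΦ _ (hD _),
      hΦ _ (Submodule.subset_span ⟨i, rfl⟩), mul_smul_comm, smul_comm]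

theorem IsFrobeniusBasis.exists_isInvPowLinear_extension [IsDomain S] [Module.IsTorsionFree S A]
    [ExpChar A p] {ι : Type*} {w : ι → A} {D : S} (hw : IsFrobeniusBasis p w D) (e : ℕ)
    {σ : S →+ S} (hσ : IsInvPowLinear (p ^ e) σ) :
    ∃ Φ : A →+ A, IsInvPowLinear (p ^ e) Φ ∧
      ∀ s, Φ (algebraMap S A s) = algebraMap S A (D * σ s) := by
  have hDw (a : A) : D • a ∈ Submodule.span S (Set.range w) := by
    simpa using hw.pow_smul_mem_span 0 a
  obtain ⟨Φ₀, hΦ₀⟩ := exists_addMonoidHom_span_pow (hw.linearIndependent e) hσ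
  let N := Submodule.span S (Set.range fun i => w i ^ p ^ e)
  let δ : A →ₗ[S] N :=
    (LinearMap.lsmul S A (D ^ p ^ e)).codRestrict N (hw.pow_smul_mem_span e)
  have hδ (a : A) : (δ a : A) = D ^ p ^ e • a := rfl
  have hmul := map_pow_mul_eq_smul_mul hDw hΦ₀ hδ
  refine ⟨Φ₀.comp δ.toAddMonoidHom, fun b a => ?_, fun s => ?_⟩
  · have hδδ : δ (1 ^ p ^ e * δ (b ^ p ^ e * a)) = δ (b ^ p ^ e * δ a) :=
      Subtype.ext (by simp only [hδ, one_pow, one_mul, mul_smul_comm])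
    refine smul_right_injective A hw.denom_ne_zero ?_
    have h₁ := hmul 1 _ (δ (b ^ p ^ e * a)).2
    rw [hδδ, hmul b _ (δ a).2, one_mul] at h₁
    exact h₁.symm
  · have heq : (δ (algebraMap S A s) : A) = s • (D • 1) ^ p ^ e := by
      rw [hδ, smul_pow, one_pow, smul_comm, Algebra.algebraMap_eq_smul_one]
    have hmem := heq ▸ (δ _).2
    rw [AddMonoidHom.comp_apply, LinearMap.toAddMonoidHom_coe,
      show δ _ = ⟨_, hmem⟩ from Subtype.ext heq, hΦ₀ _ (hDw _), Algebra.smul_def,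
      Algebra.smul_def, mul_one, mul_comm D, map_mul]

theorem toSubmodule_adjoin_range_pow (S A : Type*) [CommRing S] [CommRing A] [Algebra S A]
    (q : ℕ) : Subalgebra.toSubmodule (Algebra.adjoin S (Set.range fun a : A => a ^ q)) =
      Submodule.span S (Set.range fun a : A => a ^ q) := by
  have : Set.range (fun a : A => a ^ q) = (MonoidHom.mrange (powMonoidHom q : A →* A) : Set A) :=
    rfl
  rw [Algebra.adjoin_eq_span, this, Submonoid.closure_eq]

theorem exists_smul_adjoin_pow_mem_span_pow (p : ℕ) (S A : Type*) [CommRing S] [IsDomain S]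
    [IsNoetherianRing S] [CommRing A] [Algebra S A] [Module.Finite S A] :
    ∃ (e : ℕ) (D : S), D ≠ 0 ∧ ∀ a : Algebra.adjoin S (Set.range fun a : A => a ^ p ^ e),
      D • a ∈ Submodule.span S
        (Set.range fun b : Algebra.adjoin S (Set.range fun a : A => a ^ p ^ e) => b ^ p) := by
  let V (e : ℕ) : Submodule S A := Submodule.span S (Set.range fun a : A => a ^ p ^ e)
  let rank (e : ℕ) : ℕ := Module.finrank S (V e)
  -- The ranks stabilise at their minimum; there `A₀` and the span of its `p`-th powers have equal
  -- rank, so that `A₀` is generically separable over `S`.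
  let e := Function.argmin rank
  refine ⟨e, ?_⟩
  let A₀ := Algebra.adjoin S (Set.range fun a : A => a ^ p ^ e)
  let N : Submodule S A₀ := Submodule.span S (Set.range fun a : A₀ => a ^ p)
  have hN : V (e + 1) ≤ N.map A₀.val.toLinearMap := by
    rw [Submodule.span_le]
    rintro _ ⟨a, rfl⟩
    let b : A₀ := ⟨a ^ p ^ e, Algebra.subset_adjoin ⟨a, rfl⟩⟩
    refine ⟨b ^ p, Submodule.subset_span ⟨b, rfl⟩, ?_⟩
    simp [b, pow_succ, pow_mul]
  have : Module.Finite S A₀ := Module.IsNoetherian.finite S A₀.toSubmodule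
  refine exists_forall_smul_mem_of_finrank_eq (N := N) (le_antisymm N.finrank_le ?_)
  calc Module.finrank S A₀ = Module.finrank S (V e) :=
        (LinearEquiv.ofEq _ _ (toSubmodule_adjoin_range_pow S A (p ^ e))).finrank_eq
    _ ≤ Module.finrank S (V (e + 1)) := Function.argmin_le rank (e + 1)
    _ ≤ Module.finrank S (N.map A₀.val.toLinearMap) := Submodule.finrank_mono hN
    _ = Module.finrank S N :=
        (Submodule.equivMapOfInjective _ Subtype.val_injective N).finrank_eq.symm

theorem exists_addMonoidHom_extension (p : ℕ) [Fact p.Prime] (S A : Type*) [CommRing S]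
    [IsDomain S] [IsNoetherianRing S] [CommRing A] [ExpChar A p] [Algebra S A]
    [Module.Finite S A] [Module.IsTorsionFree S A] : ∃ (e₀ : ℕ) (D : S), D ≠ 0 ∧
      ∀ (e : ℕ) (σ : S →+ S), IsInvPowLinear (p ^ e) σ → ∃ Φ : A →+ A,
        (∀ b a, Φ (b ^ p ^ e * a) = b ^ p ^ e₀ * Φ a) ∧
        ∀ s, Φ (algebraMap S A s) = algebraMap S A (D * σ (s ^ p ^ e₀)) := by
  obtain ⟨e₀, D, hD, hpow⟩ := exists_smul_adjoin_pow_mem_span_pow p S A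
  let A₀ := Algebra.adjoin S (Set.range fun a : A => a ^ p ^ e₀)
  have : ExpChar A₀ p := A₀.val.toRingHom.expChar Subtype.val_injective p
  have : Module.Finite S A₀ := Module.IsNoetherian.finite S A₀.toSubmodule
  obtain ⟨w, D', hw⟩ := exists_isFrobeniusBasis (A := A₀) hD hpow
  refine ⟨e₀, D', hw.denom_ne_zero, fun e σ hσ => ?_⟩
  obtain ⟨Φ, hΦ, hΦS⟩ := hw.exists_isInvPowLinear_extension e hσ
  let F : A →+* A₀ := (iterateFrobenius A p e₀).codRestrict A₀ fun a =>
    Algebra.subset_adjoin ⟨a, rfl⟩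
  have hF (a : A) : (F a : A) = a ^ p ^ e₀ := rfl
  refine ⟨(A₀.val.toAddMonoidHom.comp Φ).comp F.toAddMonoidHom, fun b a => ?_, fun s => ?_⟩
  · change ((Φ (F (b ^ p ^ e * a)) : A₀) : A) = b ^ p ^ e₀ * (Φ (F a) : A₀)
    rw [map_mul, map_pow, hΦ, MulMemClass.coe_mul, hF]
  · change ((Φ (F (algebraMap S A s)) : A₀) : A) = _
    rw [show F (algebraMap S A s) = algebraMap S A₀ (s ^ p ^ e₀) from
      Subtype.ext (map_pow _ _ _).symm, hΦS]
    rfl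

end FrobeniusBasis

section InvPowLinear

variable {p : ℕ}

theorem exists_addMonoidHom_map_mul_ne_zero {k L : Type*} [Field k] [CommRing L] (φ : k →+* L)
    {c : L} (hc : c ≠ 0) : ∃ l : L →+ k, (∀ a b, l (φ a * b) = a * l b) ∧ l c ≠ 0 := by
  let _ := φ.toAlgebra
  obtain ⟨g, hg⟩ : ∃ g : Module.Dual k L, g c ≠ 0 := by
    by_contra! h
    exact hc ((Module.forall_dual_apply_eq_zero_iff k c).1 h)
  exact ⟨g.toAddMonoidHom, fun a b => g.map_smul a b, hg⟩

theorem exists_isInvPowLinear_ne_zero {k : Type*} [Field k] [ExpChar k p] (e : ℕ) {c : k}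
    (hc : c ≠ 0) : ∃ l : k →+ k, IsInvPowLinear (p ^ e) l ∧ l c ≠ 0 :=
  exists_addMonoidHom_map_mul_ne_zero (iterateFrobenius k p e) hc

section Coeff

variable {τ k : Type*} [CommRing k] [ExpChar k p] (e : ℕ)
  (s : MvPowerSeries τ k)

theorem coeff_smul_expChar_pow (m : τ →₀ ℕ) :
    MvPowerSeries.coeff (p ^ e • m) (s ^ p ^ e) = MvPowerSeries.coeff m s ^ p ^ e := by
  rw [← MvPowerSeries.map_iterateFrobenius_expand p (expChar_ne_zero k p),
    MvPowerSeries.coeff_map, MvPowerSeries.coeff_expand_smul, iterateFrobenius_def]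

theorem coeff_expChar_pow_eq_zero [Finite τ] {m : τ →₀ ℕ} (hm : ∀ m', p ^ e • m' ≠ m) :
    MvPowerSeries.coeff m (s ^ p ^ e) = 0 := by
  obtain ⟨i, hi⟩ : ∃ i, ¬ p ^ e ∣ m i := by
    by_contra! h
    choose t ht using h
    exact hm (Finsupp.equivFunOnFinite.symm t) (by ext i; simp [ht i])
  rw [← MvPowerSeries.map_iterateFrobenius_expand p (expChar_ne_zero k p),
    MvPowerSeries.coeff_map, MvPowerSeries.coeff_expand_of_not_dvd _ _ _ hi, map_zero]

end Coeff

theorem exists_eq_add_smul_of_smul_add_eq {τ : Type*} {q : ℕ} {α β u v : τ →₀ ℕ}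
    (hα : ∀ i, α i < q) (h : q • u + v = α + q • β) : ∃ v', u + v' = β ∧ v = α + q • v' := by
  have hle : u ≤ β := fun i => by
    have hi : q * u i + v i = α i + q * β i := by simpa using DFunLike.congr_fun h i
    by_contra! hlt
    have := Nat.mul_le_mul_left q (Nat.succ_le_of_lt hlt)
    have := hα i
    rw [Nat.mul_succ] at *
    omega
  obtain ⟨v', rfl⟩ := exists_add_of_le hle
  exact ⟨v', rfl, add_left_cancel (h.trans (by rw [smul_add, add_left_comm]))⟩

theorem exists_isInvPowLinear_mvPowerSeries {τ k : Type*} [Finite τ] [CommRing k] [ExpChar k p]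
    {e : ℕ} {l : k →+ k} (hl : IsInvPowLinear (p ^ e) l) {α : τ →₀ ℕ} (hα : ∀ i, α i < p ^ e) :
    ∃ σ : MvPowerSeries τ k →+ MvPowerSeries τ k, IsInvPowLinear (p ^ e) σ ∧
      ∀ β t, MvPowerSeries.coeff β (σ t) = l (MvPowerSeries.coeff (α + p ^ e • β) t) := by
  classical
  let σ : MvPowerSeries τ k →+ MvPowerSeries τ k :=
    { toFun := fun t β => l (MvPowerSeries.coeff (α + p ^ e • β) t)
      map_zero' := funext fun β => by rw [map_zero, map_zero]; rfl
      map_add' := fun a b => funext fun β => by rw [map_add, map_add]; rfl }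
  have hσ (β t) : MvPowerSeries.coeff β (σ t) = l (MvPowerSeries.coeff (α + p ^ e • β) t) := rfl
  refine ⟨σ, fun s t => MvPowerSeries.ext fun β => ?_, hσ⟩
  have hq : p ^ e ≠ 0 := pow_ne_zero e (expChar_ne_zero k p)
  rw [hσ, MvPowerSeries.coeff_mul, MvPowerSeries.coeff_mul, map_sum]
  refine (Finset.sum_of_injOn (fun u => (p ^ e • u.1, α + p ^ e • u.2)) ?_ ?_ ?_ ?_).symm
  · rintro ⟨u, v⟩ - ⟨u', v'⟩ - h
    rw [Prod.mk.injEq, add_right_inj] at h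
    exact Prod.ext (smul_right_injective _ hq h.1) (smul_right_injective _ hq h.2)
  · rintro ⟨u, v⟩ h
    simp only [Finset.mem_coe, Finset.HasAntidiagonal.mem_antidiagonal] at h ⊢
    rw [← h, smul_add, add_left_comm]
  · rintro ⟨u, v⟩ h hn
    rw [Finset.HasAntidiagonal.mem_antidiagonal] at h
    rw [coeff_expChar_pow_eq_zero, zero_mul, map_zero]
    rintro u rfl
    obtain ⟨v', huv, rfl⟩ := exists_eq_add_smul_of_smul_add_eq hα h
    exact hn ⟨(u, v'), by simpa using huv, rfl⟩
  · rintro ⟨u, v⟩ -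
    rw [coeff_smul_expChar_pow, hl, hσ]

theorem exists_isInvPowLinear_isUnit {τ k : Type*} [Finite τ] [Field k] [ExpChar k p]
    {e : ℕ} {α : τ →₀ ℕ} (hα : ∀ i, α i < p ^ e) {f : MvPowerSeries τ k}
    (hf : MvPowerSeries.coeff α f ≠ 0) :
    ∃ σ : MvPowerSeries τ k →+ MvPowerSeries τ k, IsInvPowLinear (p ^ e) σ ∧ IsUnit (σ f) := by
  obtain ⟨l, hl, hlf⟩ := exists_isInvPowLinear_ne_zero (p := p) e hf
  obtain ⟨σ, hσ, hcoeff⟩ := exists_isInvPowLinear_mvPowerSeries hl hα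
  refine ⟨σ, hσ, ?_⟩
  rw [MvPowerSeries.isUnit_iff_constantCoeff, ← MvPowerSeries.coeff_zero_eq_constantCoeff_apply,
    hcoeff, smul_zero, add_zero]
  exact hlf.isUnit

end InvPowLinear

/-! ### Colengths of bracket powers -/

section BracketPow

variable {A : Type*} [CommRing A] {I I' : Ideal A}

theorem bracketPow_mono (h : I ≤ I') (q : ℕ) : I.bracketPow q ≤ I'.bracketPow q :=
  Ideal.span_mono (Set.image_mono h)

theorem pow_mem_bracketPow {a : A} (h : a ∈ I) (q : ℕ) : a ^ q ∈ I.bracketPow q :=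
  Ideal.subset_span ⟨a, h, rfl⟩

theorem radical_bracketPow (I : Ideal A) {q : ℕ} (hq : q ≠ 0) :
    (I.bracketPow q).radical = I.radical := by
  refine le_antisymm (Ideal.radical_mono (Ideal.span_le.2 ?_)) fun a ⟨n, hn⟩ => ⟨n * q, ?_⟩
  · rintro _ ⟨a, ha, rfl⟩
    exact I.pow_mem_of_mem ha q (Nat.pos_of_ne_zero hq)
  · rw [pow_mul]
    exact pow_mem_bracketPow hn q

theorem map_bracketPow {B : Type*} [CommRing B] {π : A →+* B} (hπ : Function.Surjective π)
    (I : Ideal A) (q : ℕ) : (I.bracketPow q).map π = (I.map π).bracketPow q := by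
  rw [Ideal.bracketPow, Ideal.bracketPow, Ideal.map_span, Set.image_image]
  congr 1
  ext b
  simp only [map_pow, Set.mem_image, SetLike.mem_coe, Ideal.mem_map_iff_of_surjective π hπ,
    exists_exists_and_eq_and]

theorem bracketPow_span (p : ℕ) [ExpChar A p] (s : Set A) (e : ℕ) :
    (Ideal.span s).bracketPow (p ^ e) = Ideal.span ((· ^ p ^ e) '' s) := by
  refine le_antisymm (Ideal.span_le.2 ?_) (Ideal.span_mono (Set.image_mono Ideal.subset_span))
  rintro _ ⟨a, ha, rfl⟩
  exact pow_mem_span_pow ha e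

theorem map_mem_bracketPow {Φ : A →+ A} {m n q : ℕ}
    (hΦ : ∀ b a, Φ (b ^ q * a) = b ^ n * Φ a) {y : A} (hy : y ∈ I.bracketPow (m * q)) :
    Φ y ∈ I.bracketPow (m * n) := by
  induction hy using Submodule.closure_induction with
  | zero => rw [map_zero]; exact zero_mem _
  | add y z _ _ hy hz => rw [map_add]; exact add_mem hy hz
  | smul_mem r z hz =>
    obtain ⟨a, ha, rfl⟩ := hz
    simp only [smul_eq_mul]
    rw [mul_comm r, pow_mul, hΦ, ← pow_mul]
    exact Ideal.mul_mem_right _ _ (pow_mem_bracketPow ha _)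

end BracketPow

section Length

variable {A : Type*} [CommRing A]

theorem length_quotient_anti {K K' : Ideal A} (h : K ≤ K') :
    Module.length A (A ⧸ K') ≤ Module.length A (A ⧸ K) :=
  Module.length_le_of_surjective (Submodule.factor h) (Submodule.factor_surjective h)

theorem length_quotient_eq_add (K : Ideal A) (y : A) :
    Module.length A (A ⧸ K) = Module.length A (A ⧸ K.colon {y}) +
      Module.length A (A ⧸ (K ⊔ Ideal.span {y})) := by
  let f : (A ⧸ K.colon {y}) →ₗ[A] A ⧸ K :=
    (K.colon {y}).mapQ K (LinearMap.toSpanSingleton A A y) fun a ha => by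
      simpa using Submodule.mem_colon_singleton.1 ha
  refine Module.length_eq_add_of_exact f (Submodule.factor le_sup_left) ?_
    (Submodule.factor_surjective _) ?_
  · have hcomap : Submodule.comap (LinearMap.toSpanSingleton A A y) K = K.colon {y} := by
      ext a
      simp [Submodule.mem_colon_singleton]
    rw [← LinearMap.ker_eq_bot, Submodule.ker_mapQ, hcomap, Submodule.mkQ_map_self]
  · rw [LinearMap.exact_iff, Submodule.factor, Submodule.ker_mapQ, Submodule.range_mapQ,
      LinearMap.range_toSpanSingleton, Submodule.comap_id, Submodule.map_sup,
      Submodule.mkQ_map_self, bot_sup_eq]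

theorem length_colon_add_le {K K' : Ideal A} (h : K ≤ K') {y : A} (hy : y ∈ K') :
    Module.length A (A ⧸ K.colon {y}) + Module.length A (A ⧸ K') ≤ Module.length A (A ⧸ K) := by
  rw [length_quotient_eq_add K y]
  gcongr
  exact length_quotient_anti (sup_le h ((Ideal.span_singleton_le_iff_mem _).2 hy))

theorem length_quotient_le_add {K : Ideal A} {c y : A} (hcy : c * y ∈ K) :
    Module.length A (A ⧸ K) ≤
      Module.length A (A ⧸ (K ⊔ Ideal.span {c})) + Module.length A (A ⧸ (K ⊔ Ideal.span {y})) := by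
  rw [length_quotient_eq_add K y]
  gcongr
  refine length_quotient_anti (sup_le (fun a ha => ?_) ?_)
  · exact Submodule.mem_colon_singleton.2 (K.mul_mem_right y ha)
  · exact (Ideal.span_singleton_le_iff_mem _).2 (Submodule.mem_colon_singleton.2 hcy)

theorem length_quotient_sup_span_pow_le (K : Ideal A) (y : A) (q : ℕ) :
    Module.length A (A ⧸ (K ⊔ Ideal.span {y ^ q})) ≤
      q * Module.length A (A ⧸ (K ⊔ Ideal.span {y})) := by
  induction q with
  | zero =>
    have : Subsingleton (A ⧸ (K ⊔ Ideal.span {y ^ 0})) :=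
      Ideal.Quotient.subsingleton_iff.2 (by simp)
    simp
  | succ q ih =>
    have hmem : y * y ^ q ∈ K ⊔ Ideal.span {y ^ (q + 1)} := by
      rw [← pow_succ']
      exact Ideal.mem_sup_right (Ideal.mem_span_singleton_self _)
    rw [Nat.cast_succ, add_one_mul, add_comm (_ * _)]
    refine (length_quotient_le_add hmem).trans (add_le_add ?_ (le_trans ?_ ih))
    all_goals exact length_quotient_anti (sup_le_sup_right le_sup_left _)

theorem length_quotient_sup_pow_le {ι : Type*} (x : ι → A) (q : ℕ) (s : Finset ι) (K : Ideal A) :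
    Module.length A (A ⧸ (K ⊔ s.sup fun i => Ideal.span {x i ^ q})) ≤
      (q ^ s.card : ℕ) * Module.length A (A ⧸ (K ⊔ s.sup fun i => Ideal.span {x i})) := by
  classical
  induction s using Finset.induction_on generalizing K with
  | empty => rw [Finset.card_empty, pow_zero, Nat.cast_one, one_mul, Finset.sup_empty,
      Finset.sup_empty]
  | insert i s hi ih =>
    have h := length_quotient_sup_span_pow_le (K ⊔ s.sup fun i => Ideal.span {x i}) (x i) q
    rw [Finset.sup_insert, Finset.sup_insert, Finset.card_insert_of_notMem hi, ← sup_assoc,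
      ← sup_assoc, pow_succ, Nat.cast_mul, mul_assoc]
    refine (ih _).trans ?_
    gcongr
    rwa [sup_right_comm _ _ (Ideal.span {x i ^ q}), sup_right_comm _ _ (Ideal.span {x i})] at h

theorem length_quotient_le_of_mul_mem {ι : Type*} (y : ι → A) (c : A) (s : Finset ι) (K : Ideal A)
    (hc : ∀ i ∈ s, c * y i ∈ K) :
    Module.length A (A ⧸ K) ≤ Module.length A (A ⧸ (K ⊔ s.sup fun i => Ideal.span {y i})) +
      s.card * Module.length A (A ⧸ (K ⊔ Ideal.span {c})) := by
  classical
  induction s using Finset.induction_on generalizing K with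
  | empty => rw [Finset.sup_empty, sup_bot_eq]; exact le_self_add
  | insert i s hi ih =>
    have ih' := ih (K ⊔ Ideal.span {y i}) fun j hj =>
      Ideal.mem_sup_left (hc j (Finset.mem_insert_of_mem hj))
    rw [Finset.sup_insert, Finset.card_insert_of_notMem hi, ← sup_assoc, Nat.cast_succ,
      add_one_mul, ← add_assoc, add_comm]
    refine (length_quotient_le_add (hc i (Finset.mem_insert_self _ _))).trans
      (add_le_add_right (ih'.trans ?_) _)
    gcongr
    exact length_quotient_anti (sup_le_sup_right le_sup_left _)

end Length

section HilbertKunzBound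

theorem exists_length_bracketPow_le (B : Type*) [CommRing B] [IsLocalRing B] [IsNoetherianRing B]
    {n : ℕ} (hn : ringKrullDim B = n) {J : Ideal B} (hJ : maximalIdeal B ≤ J.radical) :
    ∃ C : ℕ, ∀ q, Module.length B (B ⧸ J.bracketPow q) ≤ (C * q ^ n : ℕ) := by
  obtain ⟨n', x, hn', hx⟩ := exists_radical_span_eq_maximalIdeal B
  obtain rfl : n = n' := by exact_mod_cast hn.symm.trans hn'
  have hmem (i) : x i ∈ J.radical := hJ (hx ▸ Ideal.le_radical (Ideal.subset_span ⟨i, rfl⟩))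
  choose N hN using hmem
  let L : Ideal B := Finset.univ.sup fun i => Ideal.span {x i ^ N i}
  have hL : maximalIdeal B ≤ (⊥ ⊔ L).radical := by
    rw [bot_sup_eq, ← hx, Ideal.radical_le_radical_iff, Ideal.span_le]
    rintro _ ⟨i, rfl⟩
    exact ⟨N i, Finset.le_sup (f := fun i => Ideal.span {x i ^ N i}) (Finset.mem_univ i)
      (Ideal.mem_span_singleton_self _)⟩
  obtain ⟨C, hC⟩ := ENat.ne_top_iff_exists.1 (length_quotient_ne_top hL)
  refine ⟨C, fun q => ?_⟩
  have hle : ⊥ ⊔ (Finset.univ.sup fun i => Ideal.span {(x i ^ N i) ^ q}) ≤ J.bracketPow q := by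
    rw [bot_sup_eq]
    exact Finset.sup_le fun i _ =>
      (Ideal.span_singleton_le_iff_mem _).2 (pow_mem_bracketPow (hN i) q)
  calc Module.length B (B ⧸ J.bracketPow q) ≤ _ := length_quotient_anti hle
    _ ≤ _ := length_quotient_sup_pow_le _ q Finset.univ ⊥
    _ = (C * q ^ n : ℕ) := by
      rw [← hC, Finset.card_univ, Fintype.card_fin, mul_comm C, Nat.cast_mul]

theorem exists_length_bracketPow_sup_span_le {A : Type*} [CommRing A] [IsLocalRing A]
    [IsNoetherianRing A] {d : ℕ} (hd : ringKrullDim A = d) {I : Ideal A}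
    (hI : maximalIdeal A ≤ I.radical) {c : A} (hc : c ∈ nonZeroDivisors A) :
    ∃ C : ℕ, ∀ q, q ≠ 0 →
      q * Module.length A (A ⧸ (I.bracketPow q ⊔ Ideal.span {c})) ≤ (C * q ^ d : ℕ) := by
  by_cases hcu : IsUnit c
  · refine ⟨0, fun q _ => ?_⟩
    have : Subsingleton (A ⧸ (I.bracketPow q ⊔ Ideal.span {c})) := by
      rw [Ideal.Quotient.subsingleton_iff, Ideal.span_singleton_eq_top.2 hcu, sup_top_eq]
    simp
  let B := A ⧸ Ideal.span {c}
  let π : A →+* B := Ideal.Quotient.mk _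
  have hπ : Function.Surjective π := Ideal.Quotient.mk_surjective
  have : Nontrivial B := Ideal.Quotient.nontrivial_iff.2 (mt Ideal.span_singleton_eq_top.1 hcu)
  have : IsLocalRing B := IsLocalRing.of_surjective' π hπ
  have : IsLocalHom π := IsLocalHom.of_surjective π hπ
  obtain ⟨n, -, hn, -⟩ := exists_radical_span_eq_maximalIdeal B
  have hnd : n + 1 ≤ d := by
    have := ringKrullDim_quotient_succ_le_of_nonZeroDivisor hc
    rw [hn, hd] at this
    exact_mod_cast this
  have hJ : maximalIdeal B ≤ (I.map π).radical := by
    rw [← map_maximalIdeal_of_surjective π hπ]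
    exact (Ideal.map_mono hI).trans (Ideal.map_radical_le π)
  obtain ⟨C, hC⟩ := exists_length_bracketPow_le B hn hJ
  refine ⟨C, fun q hq => ?_⟩
  have hlen : Module.length A (A ⧸ (I.bracketPow q ⊔ Ideal.span {c})) =
      Module.length B (B ⧸ (I.map π).bracketPow q) := by
    rw [← map_bracketPow hπ, sup_comm, ← Module.length_eq_of_surjective (S := A) hπ]
    exact (DoubleQuot.quotQuotEquivQuotSupₐ A _ (I.bracketPow q)).toLinearEquiv.length_eq.symm
  calc q * Module.length A (A ⧸ (I.bracketPow q ⊔ Ideal.span {c}))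
      ≤ q * (C * q ^ n : ℕ) := by rw [hlen]; gcongr; exact hC q
    _ = (C * q ^ (n + 1) : ℕ) := by push_cast; ring
    _ ≤ (C * q ^ d : ℕ) := by
      have := Nat.pow_le_pow_right (Nat.pos_of_ne_zero hq) hnd
      exact_mod_cast Nat.mul_le_mul_left C this

end HilbertKunzBound

/-! ### Tight closure from small colengths -/

section Descent

variable {τ k A : Type*} [Finite τ] [Field k] [CommRing A]
  [Algebra (MvPowerSeries τ k) A]

theorem exists_mvPowerSeries_coeff_eq (k : Type*) [CommSemiring k] {ι τ : Type*} [Finite ι]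
    {a : ι → τ →₀ ℕ} (ha : Function.Injective a) :
    ∃ F : (ι → k) →ₗ[k] MvPowerSeries τ k, ∀ g i, MvPowerSeries.coeff (a i) (F g) = g i := by
  classical
  let _ := Fintype.ofFinite ι
  refine ⟨LinearMap.lsum k _ k fun i => MvPowerSeries.monomial (a i), fun g i => ?_⟩
  rw [LinearMap.lsum_apply, LinearMap.sum_apply, map_sum, Finset.sum_eq_single i]
  · exact MvPowerSeries.coeff_monomial_same _ _
  · exact fun j _ hj => MvPowerSeries.coeff_monomial_ne (ha.ne hj.symm) _
  · exact fun hi => absurd (Finset.mem_univ i) hi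

theorem exists_coeff_ne_zero_of_length_lt [Algebra k A]
    [IsScalarTower k (MvPowerSeries τ k) A] [IsLocalRing A]
    (hres : Function.Surjective (algebraMap k (ResidueField A))) {J : Ideal A} {N : ℕ}
    (hJ : Module.length A (A ⧸ J) < (N ^ Nat.card τ : ℕ)) :
    ∃ (f : MvPowerSeries τ k) (α : τ →₀ ℕ), (∀ i, α i < N) ∧ MvPowerSeries.coeff α f ≠ 0 ∧
      algebraMap _ A f ∈ J := by
  let a (m : τ → Fin N) : τ →₀ ℕ := Finsupp.equivFunOnFinite.symm fun i => m i
  have ha : Function.Injective a := fun m m' h => funext fun i => Fin.ext (DFunLike.congr_fun h i)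
  obtain ⟨F, hF⟩ := exists_mvPowerSeries_coeff_eq k ha
  let L : ((τ → Fin N) → k) →ₗ[k] A ⧸ J := (J.mkQ.restrictScalars k).comp
    (((Algebra.linearMap (MvPowerSeries τ k) A).restrictScalars k).comp F)
  -- The `N ^ |τ|` monomials with exponents below `N` are too many to be independent modulo `J`.
  have hL : ¬ Function.Injective L := fun hinj => by
    have hle := Module.length_le_of_injective L hinj
    rw [length_eq_of_surjective_residueField (M := A ⧸ J) hres, Module.length_pi,
      Module.length_eq_one k k, mul_one] at hle
    rw [ENat.card_eq_coe_natCard, Nat.card_fun, Nat.card_fin] at hle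
    exact (hle.trans_lt hJ).false
  obtain ⟨g, hg, hg0⟩ : ∃ g, L g = 0 ∧ g ≠ 0 := by
    by_contra! h
    exact hL ((injective_iff_map_eq_zero L).2 h)
  obtain ⟨m, hm⟩ := Function.ne_iff.1 hg0
  exact ⟨F g, a m, fun i => (m i).2, by rwa [hF], (Submodule.Quotient.mk_eq_zero J).1 hg⟩

theorem algebraMap_mul_pow_mem_bracketPow {p : ℕ} [ExpChar k p] {e₀ e m : ℕ}
    {D : MvPowerSeries τ k}
    (hΦ : ∀ σ : MvPowerSeries τ k →+ MvPowerSeries τ k, IsInvPowLinear (p ^ (e₀ + e)) σ →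
      ∃ Φ : A →+ A, (∀ b a, Φ (b ^ p ^ (e₀ + e) * a) = b ^ p ^ e₀ * Φ a) ∧
        ∀ s, Φ (algebraMap _ A s) = algebraMap _ A (D * σ (s ^ p ^ e₀)))
    {I : Ideal A} {x : A} {f : MvPowerSeries τ k} {α : τ →₀ ℕ} (hα : ∀ i, α i < p ^ e)
    (hf : MvPowerSeries.coeff α f ≠ 0)
    (hfx : algebraMap _ A f * x ^ p ^ (m + (e₀ + e)) ∈ I.bracketPow (p ^ (m + (e₀ + e)))) :
    algebraMap _ A D * x ^ p ^ (m + e₀) ∈ I.bracketPow (p ^ (m + e₀)) := by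
  have hα' (i) : (p ^ e₀ • α) i < p ^ (e₀ + e) := by
    rw [pow_add]
    exact Nat.mul_lt_mul_of_pos_left (hα i) (pow_pos (expChar_pos k p) e₀)
  have hf' : MvPowerSeries.coeff (p ^ e₀ • α) (f ^ p ^ e₀) ≠ 0 := by
    rw [coeff_smul_expChar_pow]
    exact pow_ne_zero _ hf
  obtain ⟨σ, hσ, hunit⟩ := exists_isInvPowLinear_isUnit hα' hf'
  obtain ⟨Φ, hΦmul, hΦS⟩ := hΦ σ hσ
  rw [pow_add p m (e₀ + e)] at hfx
  have hmem := map_mem_bracketPow hΦmul hfx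
  rw [mul_comm (algebraMap _ A f), pow_mul, hΦmul, hΦS, map_mul, ← pow_mul, ← pow_add,
    ← mul_assoc, mul_comm _ (algebraMap _ A D)] at hmem
  exact (Ideal.mul_unit_mem_iff_mem _ (hunit.map _)).1 hmem

end Descent

section TightClosure

variable {A : Type*} [CommRing A] [IsLocalRing A] [IsNoetherianRing A]

theorem exists_finite_mvPowerSeries_algHom {k : Type*} [Field k] [Algebra k A]
    [IsAdicComplete (maximalIdeal A) A]
    (hres : Function.Surjective (algebraMap k (ResidueField A))) {d : ℕ}
    (hd : ringKrullDim A = d) :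
    ∃ ψ : MvPowerSeries (Fin d) k →ₐ[k] A, ψ.Finite := by
  obtain ⟨n, x, hn, hx⟩ := exists_radical_span_eq_maximalIdeal A
  obtain rfl : d = n := by exact_mod_cast hd.symm.trans hn
  have hmem (i) : x i ∈ maximalIdeal A := hx ▸ Ideal.le_radical (Ideal.subset_span ⟨i, rfl⟩)
  obtain ⟨ψ, hψ⟩ := exists_mvPowerSeries_algHom (k := k) (maximalIdeal A) x hmem
  let S := MvPowerSeries (Fin d) k
  let _ : Algebra S A := ψ.toRingHom.toAlgebra
  have hmap : (maximalIdeal S).map (algebraMap S A) = Ideal.span (Set.range x) := by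
    rw [maximalIdeal_mvPowerSeries, Ideal.map_span, ← Set.range_comp]
    exact congrArg Ideal.span (congrArg Set.range (funext hψ))
  have : IsLocalHom (algebraMap S A) := by
    refine ((local_hom_TFAE (algebraMap S A)).out 2 0).1 ?_
    rw [hmap, ← hx]
    exact Ideal.le_radical
  have : IsPrecomplete (maximalIdeal S) S := by
    rw [maximalIdeal_mvPowerSeries]
    infer_instance
  have hresS : Function.Surjective (algebraMap S (ResidueField A)) := fun y =>
    (hres y).imp' (algebraMap k S) fun c hc => (congrArg (residue A) (ψ.commutes c)).trans hc
  exact ⟨ψ, finite_of_maximalIdeal_le_radical_map hresS (by rw [hmap, hx])⟩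

theorem mem_tightClosure_of_length_colon_lt [IsReduced A] [IsAdicComplete (maximalIdeal A) A]
    (p : ℕ) [Fact p.Prime] [CharP A p] {d : ℕ} (hd : ringKrullDim A = d)
    (hequi : ∀ P ∈ minimalPrimes A, ringKrullDim (A ⧸ P) = d) {I : Ideal A} {x : A}
    (hlen : ∀ m, ∃ e, Module.length A (A ⧸ (I.bracketPow (p ^ (m + e))).colon {x ^ p ^ (m + e)}) <
      ((p ^ e) ^ d : ℕ)) :
    x ∈ tightClosure p I := by
  obtain ⟨k, _, _, hres⟩ := exists_coefficientField p A
  let S := MvPowerSeries (Fin d) k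
  obtain ⟨ψ, hψ⟩ := exists_finite_mvPowerSeries_algHom hres hd
  let _ : Algebra S A := ψ.toRingHom.toAlgebra
  have : IsScalarTower k S A := IsScalarTower.of_algebraMap_eq' ψ.comp_algebraMap.symm
  have : Module.Finite S A := hψ
  have : ExpChar A p := ExpChar.prime Fact.out
  have : ExpChar k p := (algebraMap k A).expChar (algebraMap k A).injective p
  have : IsDomain S := NoZeroDivisors.to_isDomain S
  have hS : ringKrullDim S ≤ d := by simpa using ringKrullDim_mvPowerSeries_le (Fin d) k
  have : Module.IsTorsionFree S A := isTorsionFree_of_ringKrullDim_eq hS hequi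
  obtain ⟨e₀, D, hD, hΦ⟩ := exists_addMonoidHom_extension p S A
  refine ⟨algebraMap S A D, algebraMap_mem_ringCirc hS hequi hD, e₀, fun e' he' => ?_⟩
  obtain ⟨m, rfl⟩ := Nat.exists_eq_add_of_le' he'
  obtain ⟨e, he⟩ := hlen (m + e₀)
  obtain ⟨f, α, hα, hfα, hf⟩ :=
    exists_coeff_ne_zero_of_length_lt (τ := Fin d) hres (by rwa [Nat.card_fin])
  rw [Submodule.mem_colon_singleton, smul_eq_mul, add_assoc] at hf
  exact algebraMap_mul_pow_mem_bracketPow (hΦ (e₀ + e)) hα hfα hf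

end TightClosure

/-! ### Hilbert–Kunz functions -/

section HilbertKunzFunction

variable {A : Type*} [CommRing A]

theorem exists_mul_pow_mem_of_subset_tightClosure {p : ℕ} {I : Ideal A} (s : Finset A)
    (hs : (s : Set A) ⊆ tightClosure p I) :
    ∃ c ∈ ringCirc A, ∃ N, ∀ e, N ≤ e → ∀ t ∈ s, c * t ^ p ^ e ∈ I.bracketPow (p ^ e) := by
  classical
  induction s using Finset.induction_on with
  | empty => exact ⟨1, fun P hP => (Ideal.ne_top_iff_one P).1 hP.1.1.ne_top, 0, by simp⟩
  | insert a s _ ih =>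
    rw [Finset.coe_insert, Set.insert_subset_iff] at hs
    obtain ⟨⟨c₁, hc₁, N₁, h₁⟩, hs⟩ := hs
    obtain ⟨c₂, hc₂, N₂, h₂⟩ := ih hs
    refine ⟨c₁ * c₂, fun P hP h => ?_, max N₁ N₂, fun e he => ?_⟩
    · exact (hP.1.1.mem_or_mem h).elim (hc₁ P hP) (hc₂ P hP)
    · refine (Finset.forall_mem_insert _ _ _).2 ⟨?_, fun t ht => ?_⟩
      · rw [mul_right_comm]
        exact Ideal.mul_mem_right _ _ (h₁ e (le_of_max_le_left he))
      · rw [mul_assoc]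
        exact Ideal.mul_mem_left _ _ (h₂ e (le_of_max_le_right he) t ht)

variable [IsLocalRing A] [IsNoetherianRing A]

theorem exists_length_bracketPow_le_add [IsReduced A] (p : ℕ) [ExpChar A p] {d : ℕ}
    (hd : ringKrullDim A = d) {I I' : Ideal A} (hI : maximalIdeal A ≤ I.radical)
    (h : (I' : Set A) ⊆ tightClosure p I) :
    ∃ C N : ℕ, ∀ e, N ≤ e → p ^ e * Module.length A (A ⧸ I.bracketPow (p ^ e)) ≤
      p ^ e * Module.length A (A ⧸ I'.bracketPow (p ^ e)) + (C * (p ^ e) ^ d : ℕ) := by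
  obtain ⟨s, rfl⟩ := IsNoetherian.noetherian I'
  obtain ⟨c, hc, N, hN⟩ :=
    exists_mul_pow_mem_of_subset_tightClosure s (Submodule.subset_span.trans h)
  obtain ⟨C, hC⟩ :=
    exists_length_bracketPow_sup_span_le hd hI (ringCirc_subset_nonZeroDivisors hc)
  refine ⟨s.card * C, N, fun e he => ?_⟩
  have hle : (Ideal.span (s : Set A)).bracketPow (p ^ e) ≤
      I.bracketPow (p ^ e) ⊔ s.sup fun t => Ideal.span {t ^ p ^ e} := by
    rw [bracketPow_span, Ideal.span_le]
    rintro _ ⟨t, ht, rfl⟩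
    exact Ideal.mem_sup_right (Finset.le_sup (f := fun t : A => Ideal.span {t ^ p ^ e}) ht
      (Ideal.mem_span_singleton_self _))
  have hlen := (length_quotient_le_of_mul_mem (· ^ p ^ e) c s _ (hN e he)).trans
    (add_le_add_left (length_quotient_anti hle) _)
  have hCe := hC (p ^ e) (pow_pos (expChar_pos A p) e).ne'
  calc p ^ e * Module.length A (A ⧸ I.bracketPow (p ^ e))
      ≤ p ^ e * (Module.length A (A ⧸ (Ideal.span (s : Set A)).bracketPow (p ^ e)) +
          s.card * Module.length A (A ⧸ (I.bracketPow (p ^ e) ⊔ Ideal.span {c}))) := by gcongr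
    _ = p ^ e * Module.length A (A ⧸ (Ideal.span (s : Set A)).bracketPow (p ^ e)) +
          s.card * ((p ^ e : ℕ) *
            Module.length A (A ⧸ (I.bracketPow (p ^ e) ⊔ Ideal.span {c}))) := by
        push_cast; ring
    _ ≤ p ^ e * Module.length A (A ⧸ (Ideal.span (s : Set A)).bracketPow (p ^ e)) +
          s.card * (C * (p ^ e) ^ d : ℕ) := by gcongr
    _ = _ := by push_cast; ring

/-- The Hilbert–Kunz function `e ↦ ℓ(A / I^{[p^e]})`, with values in `ℕ`; it takes the junk value
`0` where the length is infinite. -/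
noncomputable def hilbertKunzFunction (p : ℕ) (I : Ideal A) (e : ℕ) : ℕ :=
  (moduleLength A (A ⧸ I.bracketPow (p ^ e))).toNat

variable {p : ℕ} {I I' : Ideal A}

theorem coe_hilbertKunzFunction (hp : p ≠ 0) (hI : maximalIdeal A ≤ I.radical) (e : ℕ) :
    (hilbertKunzFunction p I e : ℕ∞) = Module.length A (A ⧸ I.bracketPow (p ^ e)) := by
  rw [hilbertKunzFunction, moduleLength, ← Module.length_eq_height, ENat.natCast_toNat]
  exact length_quotient_ne_top (by rwa [radical_bracketPow I (pow_ne_zero e hp)])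

theorem hilbertKunzFunction_anti (hp : p ≠ 0) (hI : maximalIdeal A ≤ I.radical) (h : I ≤ I')
    (e : ℕ) : hilbertKunzFunction p I' e ≤ hilbertKunzFunction p I e := by
  have := length_quotient_anti (bracketPow_mono h (p ^ e))
  rw [← coe_hilbertKunzFunction hp hI,
    ← coe_hilbertKunzFunction hp (hI.trans (Ideal.radical_mono h))] at this
  exact_mod_cast this

theorem length_colon_le_hilbertKunzFunction_sub (hp : p ≠ 0) (hI : maximalIdeal A ≤ I.radical)
    (h : I ≤ I') {x : A} (hx : x ∈ I') (e : ℕ) :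
    Module.length A (A ⧸ (I.bracketPow (p ^ e)).colon {x ^ p ^ e}) ≤
      (hilbertKunzFunction p I e - hilbertKunzFunction p I' e : ℕ) := by
  rw [ENat.natCast_sub]
  refine (ENat.addLECancellable_natCast _).le_tsub_of_add_le_right ?_
  rw [coe_hilbertKunzFunction hp hI, coe_hilbertKunzFunction hp (hI.trans (Ideal.radical_mono h))]
  exact length_colon_add_le (bracketPow_mono h _) (pow_mem_bracketPow hx _)

theorem exists_lt_pow_of_tendsto_div_pow {u : ℕ → ℝ} {b : ℝ} (hb : 0 < b)
    (hu : Tendsto (fun n => u n / b ^ n) atTop (𝓝 0)) (m : ℕ) : ∃ e, u (m + e) < b ^ e := by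
  obtain ⟨e, he⟩ := eventually_atTop.1 (hu.eventually_lt_const (inv_pos.2 (pow_pos hb m)))
  refine ⟨e, ?_⟩
  have h := (div_lt_iff₀ (pow_pos hb _)).1 (he (m + e) (Nat.le_add_left e m))
  rwa [pow_add, inv_mul_cancel_left₀ (pow_pos hb m).ne'] at h

theorem tendsto_div_pow_of_mul_le {u : ℕ → ℝ} {p C : ℝ} {d N : ℕ} (hp : 1 < p)
    (hu₀ : ∀ e, 0 ≤ u e) (hu : ∀ e, N ≤ e → p ^ e * u e ≤ C * p ^ (e * d)) :
    Tendsto (fun e => u e / p ^ (e * d)) atTop (𝓝 0) := by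
  have hp₀ : 0 < p := one_pos.trans hp
  have hlim : Tendsto (fun e => C * p⁻¹ ^ e) atTop (𝓝 0) := by
    simpa only [mul_zero] using (tendsto_pow_atTop_nhds_zero_of_lt_one (inv_nonneg.2 hp₀.le)
      (inv_lt_one_of_one_lt₀ hp)).const_mul C
  refine squeeze_zero' (.of_forall fun e => div_nonneg (hu₀ e) (pow_nonneg hp₀.le _)) ?_ hlim
  filter_upwards [eventually_ge_atTop N] with e he
  rw [inv_pow, ← div_eq_mul_inv, div_le_div_iff₀ (pow_pos hp₀ _) (pow_pos hp₀ _), mul_comm]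
  exact hu e he

theorem tendsto_hilbertKunzFunction_sub_iff [IsReduced A] [IsAdicComplete (maximalIdeal A) A]
    [Fact p.Prime] [CharP A p] {d : ℕ} (hd : ringKrullDim A = d)
    (hequi : ∀ P ∈ minimalPrimes A, ringKrullDim (A ⧸ P) = d)
    (hI : maximalIdeal A ≤ I.radical) (h : I ≤ I') :
    Tendsto (fun e => ((hilbertKunzFunction p I e : ℝ) - hilbertKunzFunction p I' e) /
      (p : ℝ) ^ (e * d)) atTop (𝓝 0) ↔ (I' : Set A) ⊆ tightClosure p I := by
  have hp : p.Prime := Fact.out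
  have : ExpChar A p := ExpChar.prime hp
  have hanti := hilbertKunzFunction_anti hp.ne_zero hI h
  constructor
  · intro hlim x hx
    refine mem_tightClosure_of_length_colon_lt p hd hequi fun m => ?_
    simp only [pow_mul'] at hlim
    obtain ⟨e, he⟩ := exists_lt_pow_of_tendsto_div_pow (by have := hp.pos; positivity) hlim m
    refine ⟨e, (length_colon_le_hilbertKunzFunction_sub hp.ne_zero hI h hx _).trans_lt ?_⟩
    rw [← Nat.cast_sub (hanti _), ← pow_mul, mul_comm, pow_mul] at he
    exact_mod_cast he
  · intro hsub
    obtain ⟨C, N, hC⟩ := exists_length_bracketPow_le_add p hd hI hsub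
    refine tendsto_div_pow_of_mul_le (C := C) (N := N) (by exact_mod_cast hp.one_lt)
      (fun e => sub_nonneg.2 (by exact_mod_cast hanti e)) fun e he => ?_
    have hle := hC e he
    rw [← coe_hilbertKunzFunction hp.ne_zero hI,
      ← coe_hilbertKunzFunction hp.ne_zero (hI.trans (Ideal.radical_mono h))] at hle
    rw [mul_sub, sub_le_iff_le_add', pow_mul]
    exact_mod_cast hle

end HilbertKunzFunction

/-- **Hochster–Huneke.** For `𝔪`-primary ideals `I ⊆ I'` of a `d`-dimensional complete
equidimensional reduced Noetherian local ring of characteristic `p`, one has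
`e_HK(I') = e_HK(I)` if and only if `I' ⊆ I^*`. -/
theorem hilbert_kunz_eq_iff_tight_closure (A : Type*) [CommRing A] [IsLocalRing A]
    [IsNoetherianRing A] [IsReduced A] (p : ℕ) [Fact p.Prime] [CharP A p]
    (hcomp : IsAdicComplete (IsLocalRing.maximalIdeal A) A)
    (d : ℕ) (hd : ringKrullDim A = d)
    (hequi : ∀ P ∈ minimalPrimes A, ringKrullDim (A ⧸ P) = d)
    (I I' : Ideal A) (hII' : I ≤ I')
    (hI : I.radical = IsLocalRing.maximalIdeal A)
    (hI' : I'.radical = IsLocalRing.maximalIdeal A)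
    (eHK eHK' : ℝ)
    (heHK : Filter.Tendsto
      (fun e : ℕ =>
        ((moduleLength A (A ⧸ I.bracketPow (p ^ e))).toNat : ℝ) / (p : ℝ) ^ (e * d))
      Filter.atTop (nhds eHK))
    (heHK' : Filter.Tendsto
      (fun e : ℕ =>
        ((moduleLength A (A ⧸ I'.bracketPow (p ^ e))).toNat : ℝ) / (p : ℝ) ^ (e * d))
      Filter.atTop (nhds eHK')) :
    eHK' = eHK ↔ (I' : Set A) ⊆ tightClosure p I := by
  have hlim := heHK.sub heHK'
  simp only [← sub_div] at hlim
  rw [← tendsto_hilbertKunzFunction_sub_iff hd hequi hI.ge hII', eq_comm, ← sub_eq_zero]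
  exact ⟨fun h => h ▸ hlim, tendsto_nhds_unique hlim⟩
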